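/- arXiv:1803.04923 — 3 statements merged into one kernel-verified Lean document; each statement's English description precedes it below -/
import Mathlib

section
/- Let E and F be separable metric spaces equipped with their Borel σ-algebras, let (Ω, μ) be a probability space, and let Xₙ, X : Ω → E and Yₙ, Y : Ω → F be measurable maps such that (Xₙ, Yₙ) converges to (X, Y) in distribution. Let P : F → (probability measures on E) be a Markov kernel (i.e., each P_y is a probability measure and y ↦ P_y is measurable). Suppose that for every bounded continuous f : E → ℝ, the pair (E[f(Xₙ) | Yₙ], Yₙ), where E[f(Xₙ) | Yₙ] denotes the conditional expectation of f∘Xₙ given the σ-algebra generated by Yₙ, converges in distribution to (∫ f dP_Y, Y) as random elements of ℝ × F. Then P_Y is a regular conditional law of X given Y, in the sense that for every bounded Borel-measurable F₀ : E × F → ℝ one has ∫ F₀(X(ω), Y(ω)) dμ(ω) = ∫ ( ∫ F₀(x, Y(ω)) dP_{Y(ω)}(x) ) dμ(ω). -/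
open MeasureTheory Filter Topology

/-!
By the pull-out property, `E[f(Xₙ) g(Yₙ)] = E[E[f(Xₙ) | Yₙ] g(Yₙ)]` for bounded continuous `f` and
`g`. The left side tends to `E[f(X) g(Y)]`, and the right side to `E[(∫ f dP_Y) g(Y)]`, since the
conditional expectations are bounded by `‖f‖` and `t` may be truncated in the test function
`(t, y) ↦ t g(y)`. Products `f(x) g(y)` determine a finite measure on `E × F`, so the joint law is
the one built from the law of `Y` and `P`.
-/

open ProbabilityTheory BoundedContinuousFunction

lemma exists_boundedContinuousFunction_eq_of_abs_le (C : ℝ) :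
    ∃ τ : ℝ →ᵇ ℝ, ∀ t, |t| ≤ C → τ t = t := by
  have abs_clamp_le (t : ℝ) : |max (-C) (min C t)| ≤ |C| :=
    abs_le.2 ⟨(neg_le_neg (le_abs_self C)).trans (le_max_left _ _),
      max_le (neg_le_abs C) ((min_le_left _ _).trans (le_abs_self C))⟩
  refine ⟨.ofNormedAddCommGroup (fun t ↦ max (-C) (min C t)) (by fun_prop) |C| abs_clamp_le,
    fun t ht ↦ ?_⟩
  obtain ⟨hlower, hupper⟩ := abs_le.1 ht
  simp [hlower, hupper]

section Tendsto

variable {ι Ω' F : Type*} {Ω : ι → Type*} [TopologicalSpace F] {l : Filter ι}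
  {mΩ : ∀ i, MeasurableSpace (Ω i)} {μ : ∀ i, Measure (Ω i)}
  {mΩ' : MeasurableSpace Ω'} {ν : Measure Ω'}

lemma tendsto_integral_mul_boundedContinuousFunction_of_ae_abs_le {C : ℝ}
    {Zn : ∀ i, Ω i → ℝ} {Z : Ω' → ℝ} {Yn : ∀ i, Ω i → F} {Y : Ω' → F}
    (hZn : ∀ i, ∀ᵐ ω ∂μ i, |Zn i ω| ≤ C) (hZ : ∀ᵐ ω ∂ν, |Z ω| ≤ C)
    (h : ∀ φ : ℝ × F →ᵇ ℝ,
      Tendsto (fun i ↦ ∫ ω, φ (Zn i ω, Yn i ω) ∂μ i) l (𝓝 (∫ ω, φ (Z ω, Y ω) ∂ν)))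
    (g : F →ᵇ ℝ) :
    Tendsto (fun i ↦ ∫ ω, Zn i ω * g (Yn i ω) ∂μ i) l (𝓝 (∫ ω, Z ω * g (Y ω) ∂ν)) := by
  obtain ⟨τ, hτ⟩ := exists_boundedContinuousFunction_eq_of_abs_le C
  have htrunc := h (τ.compContinuous .fst * g.compContinuous .snd)
  have hlim : ∫ ω, τ (Z ω) * g (Y ω) ∂ν = ∫ ω, Z ω * g (Y ω) ∂ν :=
    integral_congr_ae <| hZ.mono fun ω hω ↦ congrArg (· * g (Y ω)) (hτ _ hω)
  have hseq (i : ι) : ∫ ω, τ (Zn i ω) * g (Yn i ω) ∂μ i = ∫ ω, Zn i ω * g (Yn i ω) ∂μ i :=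
    integral_congr_ae <| (hZn i).mono fun ω hω ↦ congrArg (· * g (Yn i ω)) (hτ _ hω)
  exact hlim ▸ htrunc.congr hseq

end Tendsto

lemma integral_condExp_mul {Ω : Type*} {m m₀ : MeasurableSpace Ω} {μ : Measure Ω} (hm : m ≤ m₀)
    [SigmaFinite (μ.trim hm)] {f g : Ω → ℝ} (hg : AEStronglyMeasurable[m] g μ)
    (hfg : Integrable (fun ω ↦ f ω * g ω) μ) (hf : Integrable f μ) :
    ∫ ω, (μ[f | m]) ω * g ω ∂μ = ∫ ω, f ω * g ω ∂μ := calc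
  ∫ ω, (μ[f | m]) ω * g ω ∂μ = ∫ ω, (μ[f * g | m]) ω ∂μ :=
    integral_congr_ae (condExp_mul_of_aestronglyMeasurable_right hg hfg hf).symm
  _ = ∫ ω, f ω * g ω ∂μ := integral_condExp hm

lemma integral_condExp_comap_mul_boundedContinuousFunction {Ω F : Type*} {mΩ : MeasurableSpace Ω}
    {mF : MeasurableSpace F} [TopologicalSpace F] [OpensMeasurableSpace F] {μ : Measure Ω}
    [IsFiniteMeasure μ] {Z : Ω → ℝ} {Y : Ω → F} (hZ : Integrable Z μ) (hY : Measurable Y)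
    (g : F →ᵇ ℝ) :
    ∫ ω, (μ[Z | mF.comap Y]) ω * g (Y ω) ∂μ = ∫ ω, Z ω * g (Y ω) ∂μ := by
  have hg : Measurable[mF.comap Y] fun ω ↦ g (Y ω) :=
    g.continuous.measurable.comp (comap_measurable Y)
  have hZg : Integrable (fun ω ↦ Z ω * g (Y ω)) μ :=
    hZ.mul_bdd (hg.mono hY.comap_le le_rfl).aestronglyMeasurable
      (ae_of_all _ fun ω ↦ g.norm_coe_le_norm (Y ω))
  exact integral_condExp_mul hY.comap_le hg.aestronglyMeasurable hZg hZ

section CondDistrib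

variable {Ω E F : Type*} {mΩ : MeasurableSpace Ω} {mE : MeasurableSpace E}
  {mF : MeasurableSpace F} {μ : Measure Ω} {X : Ω → E} {Y : Ω → F} {κ : Kernel F E}

lemma integral_map_compProd {G : Type*} [NormedAddCommGroup G] [NormedSpace ℝ G] [SFinite μ]
    [IsSFiniteKernel κ] (hY : AEMeasurable Y μ) {f : F × E → G}
    (hf : Integrable f (μ.map Y ⊗ₘ κ)) :
    ∫ p, f p ∂(μ.map Y ⊗ₘ κ) = ∫ ω, ∫ x, f (Y ω, x) ∂κ (Y ω) ∂μ := by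
  have hinner : Integrable (fun y ↦ ∫ x, f (y, x) ∂κ y) (μ.map Y) := by
    simpa using hf.integral_compProd
  rw [Measure.integral_compProd hf, integral_map hY hinner.aestronglyMeasurable]

lemma integral_prodMk_of_hasCondDistrib {G : Type*} [NormedAddCommGroup G] [NormedSpace ℝ G]
    [SFinite μ] [IsSFiniteKernel κ] (h : HasCondDistrib X Y κ μ) {f : F × E → G}
    (hf : Integrable f (μ.map Y ⊗ₘ κ)) :
    ∫ ω, f (Y ω, X ω) ∂μ = ∫ ω, ∫ x, f (Y ω, x) ∂κ (Y ω) ∂μ :=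
  (h.integral_comp hf.aestronglyMeasurable).trans (integral_map_compProd h.aemeasurable_fst hf)

variable [TopologicalSpace E] [BorelSpace E] [HasOuterApproxClosed E]
  [TopologicalSpace F] [BorelSpace F] [HasOuterApproxClosed F]

lemma hasCondDistrib_of_integral_mul_boundedContinuousFunction [IsFiniteMeasure μ]
    [IsFiniteKernel κ] (hX : AEMeasurable X μ) (hY : AEMeasurable Y μ)
    (h : ∀ (f : E →ᵇ ℝ) (g : F →ᵇ ℝ),
      ∫ ω, f (X ω) * g (Y ω) ∂μ = ∫ ω, (∫ x, f x ∂κ (Y ω)) * g (Y ω) ∂μ) :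
    HasCondDistrib X Y κ μ where
  aemeasurable := hY.prodMk hX
  map_eq := by
    refine Measure.ext_of_integral_mul_boundedContinuousFunction fun g f ↦ ?_
    have hmeas : Measurable fun p : F × E ↦ g p.1 * f p.2 :=
      (g.continuous.measurable.comp measurable_fst).mul
        (f.continuous.measurable.comp measurable_snd)
    have hint : Integrable (fun p : F × E ↦ g p.1 * f p.2) (μ.map Y ⊗ₘ κ) :=
      .of_bound hmeas.aestronglyMeasurable _ <| ae_of_all _
        (g.compContinuous .fst * f.compContinuous .snd).norm_coe_le_norm
    calc ∫ p, g p.1 * f p.2 ∂μ.map (fun ω ↦ (Y ω, X ω))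
        = ∫ ω, f (X ω) * g (Y ω) ∂μ := by
          rw [integral_map (hY.prodMk hX) hmeas.aestronglyMeasurable]
          simp only [mul_comm]
      _ = ∫ ω, (∫ x, f x ∂κ (Y ω)) * g (Y ω) ∂μ := h f g
      _ = ∫ p, g p.1 * f p.2 ∂(μ.map Y ⊗ₘ κ) := by
          rw [integral_map_compProd hY hint]
          simp only [mul_comm (g _), integral_mul_const]

theorem regular_conditional_law_of_convergence_general {ι : Type*} {l : Filter ι} [l.NeBot]
    {Ωn : ι → Type*} {mΩn : ∀ i, MeasurableSpace (Ωn i)} {μn : ∀ i, Measure (Ωn i)}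
    [∀ i, IsFiniteMeasure (μn i)] [IsFiniteMeasure μ] [IsMarkovKernel κ]
    {Xn : ∀ i, Ωn i → E} {Yn : ∀ i, Ωn i → F}
    (hXn : ∀ i, AEMeasurable (Xn i) (μn i)) (hX : AEMeasurable X μ)
    (hYn : ∀ i, Measurable (Yn i)) (hY : AEMeasurable Y μ)
    -- Convergence in law is tested on products: a general continuous function on `E × F` may fail
    -- to be measurable for the product `σ`-algebra, and its integral is then the junk value `0`.
    (hconv : ∀ (f : E →ᵇ ℝ) (g : F →ᵇ ℝ),
      Tendsto (fun i ↦ ∫ ω, f (Xn i ω) * g (Yn i ω) ∂μn i) l (𝓝 (∫ ω, f (X ω) * g (Y ω) ∂μ)))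
    (hcond : ∀ (f : E →ᵇ ℝ) (φ : ℝ × F →ᵇ ℝ),
      Tendsto (fun i ↦ ∫ ω, φ ((μn i)[fun ω' ↦ f (Xn i ω') | mF.comap (Yn i)] ω, Yn i ω) ∂μn i) l
        (𝓝 (∫ ω, φ (∫ x, f x ∂κ (Y ω), Y ω) ∂μ))) :
    HasCondDistrib X Y κ μ := by
  refine hasCondDistrib_of_integral_mul_boundedContinuousFunction hX hY fun f g ↦ ?_
  have hcond_le (i : ι) :
      ∀ᵐ ω ∂μn i, |(μn i)[fun ω' ↦ f (Xn i ω') | mF.comap (Yn i)] ω| ≤ ‖f‖ :=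
    ae_bdd_abs_condExp_of_ae_bdd_abs (ae_of_all _ fun ω ↦ f.norm_coe_le_norm (Xn i ω))
  have hkernel_le : ∀ᵐ ω ∂μ, |∫ x, f x ∂κ (Y ω)| ≤ ‖f‖ :=
    ae_of_all _ fun ω ↦ f.norm_integral_le_norm (κ (Y ω))
  have hint (i : ι) : Integrable (fun ω ↦ f (Xn i ω)) (μn i) :=
    .of_bound (f.continuous.measurable.comp_aemeasurable (hXn i)).aestronglyMeasurable _
      (ae_of_all _ fun ω ↦ f.norm_coe_le_norm (Xn i ω))
  have hlim :=
    tendsto_integral_mul_boundedContinuousFunction_of_ae_abs_le hcond_le hkernel_le (hcond f) g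
  exact tendsto_nhds_unique (hconv f g) <| hlim.congr fun i ↦
    integral_condExp_comap_mul_boundedContinuousFunction (hint i) (hYn i) g

end CondDistrib

/-- A criterion for identifying a regular conditional law via limits: if `(Xₙ, Yₙ) → (X, Y)`
in distribution and, for every bounded continuous `f`, the pair
`(E[f(Xₙ) | Yₙ], Yₙ)` converges in distribution to `(∫ f dP_Y, Y)`, then `P_Y` is a regular
conditional law of `X` given `Y`. -/
theorem regular_conditional_law_of_convergence
    {E F : Type*} [MetricSpace E] [TopologicalSpace.SeparableSpace E]
    [MeasurableSpace E] [BorelSpace E]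
    [MetricSpace F] [TopologicalSpace.SeparableSpace F]
    [MeasurableSpace F] [BorelSpace F]
    {Ω : Type*} [MeasurableSpace Ω] (μ : Measure Ω) [IsProbabilityMeasure μ]
    (Xn : ℕ → Ω → E) (X : Ω → E) (Yn : ℕ → Ω → F) (Y : Ω → F)
    (hXn : ∀ n, Measurable (Xn n)) (hX : Measurable X)
    (hYn : ∀ n, Measurable (Yn n)) (hY : Measurable Y)
    (P : F → Measure E) (hP : ∀ y, IsProbabilityMeasure (P y)) (hPmeas : Measurable P)
    -- `(Xₙ, Yₙ) → (X, Y)` in distribution: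
    (hconv : ∀ φ : E × F → ℝ, Continuous φ → (∃ C, ∀ p, |φ p| ≤ C) →
      Tendsto (fun n => ∫ ω, φ (Xn n ω, Yn n ω) ∂μ) atTop
        (𝓝 (∫ ω, φ (X ω, Y ω) ∂μ)))
    -- for every bounded continuous `f : E → ℝ`, `(E[f(Xₙ)|Yₙ], Yₙ) → (∫ f dP_Y, Y)`
    -- in distribution:
    (hcond : ∀ f : E → ℝ, Continuous f → (∃ C, ∀ x, |f x| ≤ C) →
      ∀ φ : ℝ × F → ℝ, Continuous φ → (∃ C, ∀ p, |φ p| ≤ C) →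
        Tendsto
          (fun n => ∫ ω,
            φ ((μ[fun ω' => f (Xn n ω') | MeasurableSpace.comap (Yn n) inferInstance]) ω,
              Yn n ω) ∂μ)
          atTop
          (𝓝 (∫ ω, φ (∫ x, f x ∂(P (Y ω)), Y ω) ∂μ))) :
    ∀ F₀ : E × F → ℝ, Measurable F₀ → (∃ C, ∀ p, |F₀ p| ≤ C) →
      ∫ ω, F₀ (X ω, Y ω) ∂μ = ∫ ω, ∫ x, F₀ (x, Y ω) ∂(P (Y ω)) ∂μ := by
  rintro F₀ hF₀ ⟨C, hC⟩
  let κ : Kernel F E := ⟨P, hPmeas⟩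
  have : IsMarkovKernel κ := ⟨hP⟩
  have hXY : HasCondDistrib X Y κ μ :=
    regular_conditional_law_of_convergence_general (fun n ↦ (hXn n).aemeasurable) hX.aemeasurable
      hYn hY.aemeasurable
      (fun f g ↦
        let φ : E × F →ᵇ ℝ := f.compContinuous .fst * g.compContinuous .snd
        hconv φ φ.continuous ⟨‖φ‖, φ.norm_coe_le_norm⟩)
      (fun f φ ↦ hcond f f.continuous ⟨‖f‖, f.norm_coe_le_norm⟩
        φ φ.continuous ⟨‖φ‖, φ.norm_coe_le_norm⟩)
  exact integral_prodMk_of_hasCondDistrib (f := F₀ ∘ Prod.swap) hXY <|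
    .of_bound (hF₀.comp measurable_swap).aestronglyMeasurable C (ae_of_all _ fun p ↦ hC p.swap)
end

section
/- For every real κ with 4 < κ < 8, the improper integral ∫₀^∞ (log w) · w^{1−κ/4}/(1+w) dw converges, and (−sin(πκ/4)/π) · ∫₀^∞ (log w) · w^{1−κ/4}/(1+w) dw = π·cos(πκ/4)/sin(πκ/4). Equivalently, a random variable on (0,∞) with probability density w ↦ −(sin(πκ/4)/π)·w^{1−κ/4}/(1+w) has expected logarithm equal to π·cot(πκ/4). -/
open MeasureTheory Real Set

/-!
The substitution `x = t / (1 + t)` turns the Beta integral `B(u, v)` into the Mellin transform of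
`t ↦ (1 + t) ^ (-(u + v))` at `u`. For `u = s`, `v = 1 - s`, Euler's reflection formula gives
`∫₀^∞ t ^ (s - 1) / (1 + t) dt = π / sin (π s)` on the strip `0 < re s < 1`. Differentiating in `s`
brings down the factor `log t`, and `s = 2 - κ / 4` yields the result.
-/

open Asymptotics Filter Topology

theorem monotoneOn_div_one_add : MonotoneOn (fun t : ℝ => t / (1 + t)) (Ioi (-1)) := by
  intro x (hx : -1 < x) y (hy : -1 < y) hxy
  have hx' : 0 < 1 + x := by linarith
  have hy' : 0 < 1 + y := by linarith
  change x / (1 + x) ≤ y / (1 + y)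
  rw [div_le_div_iff₀ hx' hy']
  linarith

theorem image_Ioi_div_one_add : (fun t : ℝ => t / (1 + t)) '' Ioi 0 = Ioo 0 1 := by
  ext x
  constructor
  · rintro ⟨t, ht : 0 < t, rfl⟩
    exact ⟨by positivity, (div_lt_one (by positivity)).2 (lt_one_add t)⟩
  · rintro ⟨hx0, hx1⟩
    have h : 0 < 1 - x := sub_pos.2 hx1
    refine ⟨x / (1 - x), div_pos hx0 h, ?_⟩
    field_simp
    ring

theorem hasDerivAt_div_one_add {t : ℝ} (ht : 1 + t ≠ 0) :
    HasDerivAt (fun t : ℝ => t / (1 + t)) ((1 + t) ^ 2)⁻¹ t :=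
  ((hasDerivAt_id t).div ((hasDerivAt_id t).const_add 1) ht).congr_deriv (by simp)

theorem inv_sq_smul_betaIntegrand_div_one_add (u v : ℂ) {t : ℝ} (ht : 0 < t) :
    ((1 + t) ^ 2)⁻¹ •
        (((t / (1 + t) : ℝ) : ℂ) ^ (u - 1) * (1 - ((t / (1 + t) : ℝ) : ℂ)) ^ (v - 1)) =
      (t : ℂ) ^ (u - 1) • (1 + (t : ℂ)) ^ (-(u + v)) := by
  have hpos : 0 < 1 + t := by positivity
  have hne : ((1 + t : ℝ) : ℂ) ≠ 0 := Complex.ofReal_ne_zero.2 hpos.ne'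
  have harg : ((1 + t : ℝ) : ℂ).arg ≠ π := by
    rw [Complex.arg_ofReal_of_nonneg hpos.le]
    exact pi_ne_zero.symm
  have hsub : 1 - ((t / (1 + t) : ℝ) : ℂ) = ((1 + t : ℝ) : ℂ)⁻¹ := by
    norm_cast
    field_simp
    ring
  have hinv (z : ℂ) : ((1 + t : ℝ) : ℂ)⁻¹ ^ z = ((1 + t : ℝ) : ℂ) ^ (-z) := by
    rw [Complex.inv_cpow _ _ harg, Complex.cpow_neg]
  have hdiv : ((t / (1 + t) : ℝ) : ℂ) ^ (u - 1) =
      (t : ℂ) ^ (u - 1) * ((1 + t : ℝ) : ℂ) ^ (-(u - 1)) := by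
    rw [div_eq_mul_inv, Complex.ofReal_mul, Complex.mul_cpow_ofReal_nonneg ht.le (by positivity),
      Complex.ofReal_inv, hinv]
  have hpow : ((1 + t : ℝ) : ℂ) ^ (-(u + v)) =
      ((1 + t : ℝ) : ℂ) ^ (-(u - 1)) * ((1 + t : ℝ) : ℂ) ^ (-(v - 1)) *
        (((1 + t : ℝ) : ℂ) ^ 2)⁻¹ := by
    rw [← Complex.cpow_ofNat, ← Complex.cpow_neg, ← Complex.cpow_add _ _ hne,
      ← Complex.cpow_add _ _ hne]
    ring_nf
  rw [hsub, hinv, hdiv, ← Complex.ofReal_one, ← Complex.ofReal_add, hpow, Complex.real_smul,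
    smul_eq_mul]
  push_cast
  ring

theorem mellin_one_add_cpow_neg_add (u v : ℂ) :
    mellin (fun t => (1 + (t : ℂ)) ^ (-(u + v))) u = Complex.betaIntegral u v := by
  rw [Complex.betaIntegral, intervalIntegral.integral_of_le zero_le_one,
    integral_Ioc_eq_integral_Ioo, ← image_Ioi_div_one_add,
    integral_image_eq_integral_deriv_smul_of_monotoneOn measurableSet_Ioi
      (fun t (ht : 0 < t) => (hasDerivAt_div_one_add (by positivity)).hasDerivWithinAt)
      (monotoneOn_div_one_add.mono (Ioi_subset_Ioi (by simp)))]
  exact (setIntegral_congr_fun measurableSet_Ioi fun t ht =>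
    inv_sq_smul_betaIntegrand_div_one_add u v ht).symm

theorem continuousOn_one_add_cpow (a : ℂ) :
    ContinuousOn (fun t : ℝ => (1 + (t : ℂ)) ^ a) (Ioi (-1)) := by
  refine ContinuousOn.cpow_const (by fun_prop) fun t (ht : -1 < t) => ?_
  left
  simpa using neg_lt_iff_pos_add'.1 ht

theorem isBigO_one_add_cpow_atTop (a : ℂ) :
    (fun t : ℝ => (1 + (t : ℂ)) ^ a) =O[atTop] (· ^ a.re) := by
  have hnonneg : ∀ᶠ t : ℝ in atTop, 0 ≤ 1 + t := by
    filter_upwards [eventually_ge_atTop 0] with t ht using by positivity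
  have htheta : (fun t : ℝ => 1 + t) =Θ[atTop] (fun t => t) :=
    (IsEquivalent.refl.const_add_of_norm_tendsto_atTop tendsto_norm_atTop_atTop).isTheta
  refine (IsBigO.of_norm_eventuallyLE ?_).trans
    (htheta.rpow hnonneg (eventually_ge_atTop 0)).isBigO
  filter_upwards [eventually_gt_atTop 0] with t ht
  have hnorm := Complex.norm_cpow_eq_rpow_re_of_pos (show 0 < 1 + t by positivity) a
  push_cast at hnorm
  exact hnorm.le

theorem isBigO_one_add_cpow_nhds_zero (a : ℂ) :
    (fun t : ℝ => (1 + (t : ℂ)) ^ a) =O[𝓝 0] (fun _ => (1 : ℝ)) :=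
  ((continuousOn_one_add_cpow a).continuousAt (Ioi_mem_nhds (by simp))).tendsto.isBigO_one ℝ

theorem mellin_hasDerivAt_one_add_cpow_neg {a s : ℂ} (hs : 0 < s.re) (hsa : s.re < a.re) :
    MellinConvergent (fun t => Real.log t • (1 + (t : ℂ)) ^ (-a)) s ∧
      HasDerivAt (mellin fun t => (1 + (t : ℂ)) ^ (-a))
        (mellin (fun t => Real.log t • (1 + (t : ℂ)) ^ (-a)) s) s :=
  mellin_hasDerivAt_of_isBigO_rpow
    (((continuousOn_one_add_cpow (-a)).mono (Ioi_subset_Ioi (by simp))).locallyIntegrableOn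
      measurableSet_Ioi)
    (by simpa using isBigO_one_add_cpow_atTop (-a)) hsa
    (by simpa using (isBigO_one_add_cpow_nhds_zero (-a)).mono nhdsWithin_le_nhds) hs

theorem mellin_hasDerivAt_inv_one_add {s : ℂ} (hs : s.re ∈ Ioo 0 1) :
    MellinConvergent (fun t => Real.log t • (1 + (t : ℂ))⁻¹) s ∧
      HasDerivAt (mellin fun t => (1 + (t : ℂ))⁻¹)
        (mellin (fun t => Real.log t • (1 + (t : ℂ))⁻¹) s) s := by
  simpa only [Complex.cpow_neg_one] using
    mellin_hasDerivAt_one_add_cpow_neg (a := 1) hs.1 (by simpa using hs.2)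

theorem mellin_inv_one_add {s : ℂ} (hs : s.re ∈ Ioo 0 1) :
    mellin (fun t => (1 + (t : ℂ))⁻¹) s = π / Complex.sin (π * s) :=
  calc
    mellin (fun t => (1 + (t : ℂ))⁻¹) s = Complex.betaIntegral s (1 - s) := by
      simpa [Complex.cpow_neg_one] using mellin_one_add_cpow_neg_add s (1 - s)
    _ = Complex.Gamma s * Complex.Gamma (1 - s) := by
      rw [Complex.betaIntegral_eq_Gamma_mul_div s (1 - s) hs.1 (by simpa using hs.2),
        add_sub_cancel, Complex.Gamma_one, div_one]
    _ = π / Complex.sin (π * s) := Complex.Gamma_mul_Gamma_one_sub s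

theorem sin_pi_mul_ne_zero_of_re_mem_Ioo {s : ℂ} (hs : s.re ∈ Ioo 0 1) :
    Complex.sin (π * s) ≠ 0 := by
  refine sin_pi_mul_ne_zero (Complex.mem_integerComplement_iff.2 ?_)
  rintro ⟨n, rfl⟩
  obtain ⟨h0, h1⟩ := hs
  rw [Complex.intCast_re] at h0 h1
  norm_cast at h0 h1
  lia

theorem hasDerivAt_pi_div_sin_pi_mul {s : ℂ} (hs : Complex.sin (π * s) ≠ 0) :
    HasDerivAt (fun z => π / Complex.sin (π * z))
      (-(π ^ 2 * Complex.cos (π * s) / Complex.sin (π * s) ^ 2)) s := by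
  have hsin := ((hasDerivAt_id s).const_mul (π : ℂ)).csin
  refine ((hasDerivAt_const s (π : ℂ)).div hsin hs).congr_deriv ?_
  simp only [id_eq]
  ring

theorem mellin_log_smul_inv_one_add {s : ℂ} (hs : s.re ∈ Ioo 0 1) :
    mellin (fun t => Real.log t • (1 + (t : ℂ))⁻¹) s =
      -(π ^ 2 * Complex.cos (π * s) / Complex.sin (π * s) ^ 2) := by
  have hstrip : ∀ᶠ z : ℂ in 𝓝 s, z.re ∈ Ioo 0 1 :=
    Complex.continuous_re.continuousAt.eventually_mem (isOpen_Ioo.mem_nhds hs)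
  refine (mellin_hasDerivAt_inv_one_add hs).2.unique <|
    (hasDerivAt_pi_div_sin_pi_mul (sin_pi_mul_ne_zero_of_re_mem_Ioo hs)).congr_of_eventuallyEq ?_
  filter_upwards [hstrip] with z hz using mellin_inv_one_add hz

theorem integral_log_mul_rpow_div_one_add_general (κ : ℂ) (hκ1 : 4 < κ.re) (hκ2 : κ.re < 8) :
    IntegrableOn (fun w : ℝ => (Real.log w : ℂ) * ((w : ℂ) ^ (1 - κ / 4) / (1 + w))) (Ioi 0) ∧
      (-Complex.sin (π * κ / 4) / π) *
          ∫ w in Ioi (0 : ℝ), (Real.log w : ℂ) * ((w : ℂ) ^ (1 - κ / 4) / (1 + w)) =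
        π * Complex.cos (π * κ / 4) / Complex.sin (π * κ / 4) := by
  obtain ⟨s, rfl⟩ : ∃ s, κ = 4 * (2 - s) := ⟨2 - κ / 4, by ring⟩
  have hs : s.re ∈ Ioo 0 1 := by
    simp only [Complex.mul_re, Complex.re_ofNat, Complex.im_ofNat, Complex.sub_re] at hκ1 hκ2
    constructor <;> linarith
  have hintegrand (w : ℝ) : (Real.log w : ℂ) * ((w : ℂ) ^ (1 - 4 * (2 - s) / 4) / (1 + w)) =
      (w : ℂ) ^ (s - 1) • Real.log w • (1 + (w : ℂ))⁻¹ := by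
    rw [Complex.real_smul, smul_eq_mul]
    ring_nf
  have hangle : π * (4 * (2 - s)) / 4 = 2 * π - π * s := by ring
  simp only [hintegrand, hangle, Complex.sin_two_pi_sub, Complex.cos_two_pi_sub]
  refine ⟨(mellin_hasDerivAt_inv_one_add hs).1, ?_⟩
  have hsin := sin_pi_mul_ne_zero_of_re_mem_Ioo hs
  have hpi : (π : ℂ) ≠ 0 := Complex.ofReal_ne_zero.2 pi_ne_zero
  rw [← mellin, mellin_log_smul_inv_one_add hs]
  field_simp

theorem eqOn_log_mul_cpow_div_one_add_ofReal (a : ℝ) :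
    EqOn (fun w : ℝ => (Real.log w : ℂ) * ((w : ℂ) ^ (a : ℂ) / (1 + w)))
      (fun w => ((Real.log w * (w ^ a / (1 + w)) : ℝ) : ℂ)) (Ioi 0) := by
  intro w (hw : 0 < w)
  push_cast [Complex.ofReal_cpow hw.le]
  rfl

theorem integrableOn_log_mul_cpow_div_one_add_ofReal_iff (a : ℝ) :
    IntegrableOn (fun w : ℝ => (Real.log w : ℂ) * ((w : ℂ) ^ (a : ℂ) / (1 + w))) (Ioi 0) ↔
      IntegrableOn (fun w : ℝ => Real.log w * (w ^ a / (1 + w))) (Ioi 0) := by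
  rw [integrableOn_congr_fun (eqOn_log_mul_cpow_div_one_add_ofReal a) measurableSet_Ioi]
  exact ⟨fun h => h.re, fun h => h.ofReal⟩

theorem integral_log_mul_cpow_div_one_add_ofReal (a : ℝ) :
    ∫ w in Ioi (0 : ℝ), (Real.log w : ℂ) * ((w : ℂ) ^ (a : ℂ) / (1 + w)) =
      ((∫ w in Ioi (0 : ℝ), Real.log w * (w ^ a / (1 + w)) : ℝ) : ℂ) := by
  rw [setIntegral_congr_fun measurableSet_Ioi (eqOn_log_mul_cpow_div_one_add_ofReal a),
    integral_complex_ofReal]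

/-- For `4 < κ < 8`, the integral `∫₀^∞ (log w) · w^(1-κ/4)/(1+w) dw` converges and
`(-sin(πκ/4)/π) · ∫₀^∞ (log w) · w^(1-κ/4)/(1+w) dw = π cos(πκ/4)/sin(πκ/4)`. -/
theorem integral_log_mul_rpow_div_one_add (κ : ℝ) (hκ1 : 4 < κ) (hκ2 : κ < 8) :
    IntegrableOn (fun w : ℝ => Real.log w * (w ^ (1 - κ / 4) / (1 + w))) (Ioi 0) volume ∧
      (-Real.sin (π * κ / 4) / π) *
          ∫ w in Ioi (0 : ℝ), Real.log w * (w ^ (1 - κ / 4) / (1 + w)) =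
        π * Real.cos (π * κ / 4) / Real.sin (π * κ / 4) := by
  have h := integral_log_mul_rpow_div_one_add_general κ hκ1 hκ2
  rw [show 1 - (κ : ℂ) / 4 = ((1 - κ / 4 : ℝ) : ℂ) by push_cast; rfl,
    integrableOn_log_mul_cpow_div_one_add_ofReal_iff, integral_log_mul_cpow_div_one_add_ofReal] at h
  exact_mod_cast h
end

section
/- There is a unique κ₀ in the open interval (4,8) such that π·cos(πκ₀/4)/sin(πκ₀/4) + ψ(2−κ₀/4) − ψ(1) = 0, where ψ denotes the digamma function, i.e., the derivative of the function x ↦ log Γ(x) on (0,∞), and Γ is the real Gamma function. Moreover κ₀ ∈ (5,6), and for every κ ∈ (4,8) one has π·cos(πκ/4)/sin(πκ/4) + ψ(2−κ/4) − ψ(1) ≥ 0 if and only if κ ≤ κ₀. -/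
open Real Set

/-- The digamma function `ψ`: the derivative of `x ↦ log Γ(x)`. -/
noncomputable def digamma : ℝ → ℝ := deriv fun x : ℝ => Real.log (Real.Gamma x)

/-!
On `(4, 8)` the argument `πκ/4` runs over `(π, 2π)`, a single period of the cotangent, so
`π cot(πκ/4)` is strictly decreasing, while `ψ(2 - κ/4)` is decreasing because `log Γ` is convex.
A sign change on `[5, 6]` then locates the zero. Both signs rest on `ψ(1/2) - ψ(1) = -2 log 2`: at
`κ = 6` the cotangent vanishes and this is the value, and at `κ = 5` the cotangent is `1`, so
`ψ(3/4) ≥ ψ(1/2)` bounds the value below by `π - 2 log 2 > 0`.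
-/

theorem cot_eq_tan_sub (k : ℤ) (x : ℝ) : cot x = tan (k * π + π / 2 - x) := by
  rw [add_sub_assoc, add_comm, tan_add_int_mul_pi, tan_pi_div_two_sub, tan_inv_eq_cot]

theorem mapsTo_int_mul_pi_add_pi_div_two_sub_Ioo (k : ℤ) :
    MapsTo (fun x : ℝ ↦ k * π + π / 2 - x) (Ioo (k * π) ((k + 1) * π)) (Ioo (-(π / 2)) (π / 2)) :=
  fun _ hx ↦ ⟨by linarith [hx.2], by linarith [hx.1]⟩

theorem strictAntiOn_cot (k : ℤ) : StrictAntiOn cot (Ioo (k * π) ((k + 1) * π)) := by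
  rw [funext (cot_eq_tan_sub k)]
  exact strictMonoOn_tan.comp_strictAntiOn (fun _ _ _ _ hxy ↦ sub_lt_sub_left hxy _)
    (mapsTo_int_mul_pi_add_pi_div_two_sub_Ioo k)

theorem continuousOn_cot (k : ℤ) : ContinuousOn cot (Ioo (k * π) ((k + 1) * π)) := by
  rw [funext (cot_eq_tan_sub k)]
  exact continuousOn_tan_Ioo.comp (by fun_prop) (mapsTo_int_mul_pi_add_pi_div_two_sub_Ioo k)

-- `Γ` is the reciprocal of the restriction to `ℝ` of the entire function `1 / Γ`.
theorem analyticAt_Gamma {x : ℝ} (hx : ∀ m : ℕ, x ≠ -m) : AnalyticAt ℝ Gamma x := by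
  have analyticAt_inv : AnalyticAt ℝ (fun y : ℝ ↦ ((Complex.Gamma y)⁻¹).re) x :=
    (Complex.differentiable_one_div_Gamma.analyticAt x).re_ofReal
  have inv_re (y : ℝ) : ((Complex.Gamma y)⁻¹).re = (Gamma y)⁻¹ := by
    rw [Complex.Gamma_ofReal, ← Complex.ofReal_inv, Complex.ofReal_re]
  simp only [inv_re] at analyticAt_inv
  simpa only [inv_inv] using analyticAt_inv.fun_inv (inv_ne_zero (Gamma_ne_zero hx))

theorem analyticAt_log_Gamma {x : ℝ} (hx : 0 < x) : AnalyticAt ℝ (fun y ↦ log (Gamma y)) x :=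
  (analyticAt_Gamma fun m ↦ ((neg_nonpos.mpr m.cast_nonneg).trans_lt hx).ne').log
    (Gamma_pos_of_pos hx)

theorem continuousOn_digamma : ContinuousOn digamma (Ioi 0) :=
  fun _ hx ↦ (analyticAt_log_Gamma hx).deriv.continuousAt.continuousWithinAt

theorem monotoneOn_digamma : MonotoneOn digamma (Ioi 0) :=
  convexOn_log_Gamma.monotoneOn_deriv fun _ hx ↦ (analyticAt_log_Gamma hx).differentiableAt

theorem digamma_eq_div_Gamma {x d : ℝ} (hΓ : HasDerivAt Gamma d x) (hx : Gamma x ≠ 0) :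
    digamma x = d / Gamma x :=
  (hΓ.log hx).deriv

theorem digamma_one : digamma 1 = -eulerMascheroniConstant := by
  rw [digamma_eq_div_Gamma hasDerivAt_Gamma_one (by simp), Gamma_one, div_one]

theorem digamma_one_half : digamma (1 / 2) = -eulerMascheroniConstant - 2 * log 2 := by
  have sqrt_pi_ne_zero : √π ≠ 0 := (sqrt_pos.mpr pi_pos).ne'
  rw [digamma_eq_div_Gamma hasDerivAt_Gamma_one_half
      (Gamma_one_half_eq.trans_ne sqrt_pi_ne_zero), Gamma_one_half_eq]
  field_simp
  ring

/-- The expected logarithm `π cot(πκ/4) + ψ(2 - κ/4) - ψ(1)`, meaningful for `κ ∈ (4, 8)`, whose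
zero is `κ₀`. -/
noncomputable def expectedLog (κ : ℝ) : ℝ :=
  π * cot (π * κ / 4) + digamma (2 - κ / 4) - digamma 1

theorem expectedLog_eq_cos_div_sin (κ : ℝ) :
    expectedLog κ =
      π * cos (π * κ / 4) / sin (π * κ / 4) + digamma (2 - κ / 4) - digamma 1 := by
  rw [expectedLog, cot_eq_cos_div_sin, ← mul_div_assoc π (cos _)]

theorem mapsTo_pi_mul_div_four :
    MapsTo (fun κ : ℝ ↦ π * κ / 4) (Ioo 4 8) (Ioo ((1 : ℤ) * π) (((1 : ℤ) + 1) * π)) := by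
  rintro κ ⟨four_lt, lt_eight⟩
  push_cast
  exact ⟨by nlinarith [pi_pos], by nlinarith [pi_pos]⟩

theorem mapsTo_two_sub_div_four : MapsTo (fun κ : ℝ ↦ 2 - κ / 4) (Iio 8) (Ioi 0) :=
  fun κ (hκ : κ < 8) ↦ show 0 < 2 - κ / 4 by linarith

theorem strictAntiOn_expectedLog : StrictAntiOn expectedLog (Ioo 4 8) := by
  intro a ha b hb hab
  have cot_lt : cot (π * b / 4) < cot (π * a / 4) :=
    strictAntiOn_cot 1 (mapsTo_pi_mul_div_four ha) (mapsTo_pi_mul_div_four hb)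
      (by beta_reduce; gcongr)
  have digamma_le : digamma (2 - b / 4) ≤ digamma (2 - a / 4) :=
    monotoneOn_digamma (mapsTo_two_sub_div_four hb.2) (mapsTo_two_sub_div_four ha.2)
      (by beta_reduce; gcongr)
  exact sub_lt_sub_right
    (add_lt_add_of_lt_of_le (mul_lt_mul_of_pos_left cot_lt pi_pos) digamma_le) _

theorem continuousOn_expectedLog : ContinuousOn expectedLog (Ioo 4 8) := by
  have continuousOn_cot_comp : ContinuousOn (fun κ ↦ cot (π * κ / 4)) (Ioo 4 8) :=
    (continuousOn_cot 1).comp (by fun_prop) mapsTo_pi_mul_div_four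
  have continuousOn_digamma_comp : ContinuousOn (fun κ ↦ digamma (2 - κ / 4)) (Ioo 4 8) :=
    continuousOn_digamma.comp (by fun_prop) (mapsTo_two_sub_div_four.mono_left Ioo_subset_Iio_self)
  exact ((continuousOn_const.mul continuousOn_cot_comp).add continuousOn_digamma_comp).sub
    continuousOn_const

theorem expectedLog_six : expectedLog 6 = -(2 * log 2) := by
  have cot_eq_zero : cot (π * 6 / 4) = 0 := by
    rw [cot_eq_tan_sub 1, show ((1 : ℤ) : ℝ) * π + π / 2 - π * 6 / 4 = 0 by push_cast; ring,
      tan_zero]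
  rw [expectedLog, cot_eq_zero, show (2 : ℝ) - 6 / 4 = 1 / 2 by norm_num, digamma_one_half,
    digamma_one]
  ring

theorem expectedLog_five_pos : 0 < expectedLog 5 := by
  have cot_eq_one : cot (π * 5 / 4) = 1 := by
    rw [cot_eq_tan_sub 1, show ((1 : ℤ) : ℝ) * π + π / 2 - π * 5 / 4 = π / 4 by push_cast; ring,
      tan_pi_div_four]
  have digamma_le : digamma (1 / 2) ≤ digamma (2 - 5 / 4) :=
    monotoneOn_digamma (by norm_num) (by norm_num) (by norm_num)
  calc
    0 < π - 2 * log 2 := by linarith [pi_gt_three, log_two_lt_d9]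
    _ = π * 1 + digamma (1 / 2) - digamma 1 := by rw [digamma_one_half, digamma_one]; ring
    _ ≤ π * 1 + digamma (2 - 5 / 4) - digamma 1 := by gcongr
    _ = expectedLog 5 := by rw [expectedLog, cot_eq_one]

theorem exists_expectedLog_eq_zero : ∃ κ₀ ∈ Ioo 5 6, expectedLog κ₀ = 0 := by
  have expectedLog_six_neg : expectedLog 6 < 0 := by
    rw [expectedLog_six]
    linarith [log_pos one_lt_two]
  exact intermediate_value_Ioo' (by norm_num)
    (continuousOn_expectedLog.mono (Icc_subset_Ioo (by norm_num) (by norm_num)))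
    ⟨expectedLog_six_neg, expectedLog_five_pos⟩

/-- There is a unique `κ₀ ∈ (4,8)` with `π cot(πκ₀/4) + ψ(2-κ₀/4) - ψ(1) = 0`;
moreover `κ₀ ∈ (5,6)`, and for `κ ∈ (4,8)` the quantity
`π cot(πκ/4) + ψ(2-κ/4) - ψ(1)` is nonnegative if and only if `κ ≤ κ₀`. -/
theorem exists_unique_kappa_zero :
    ∃ κ₀ : ℝ, κ₀ ∈ Ioo (4 : ℝ) 8 ∧
      π * Real.cos (π * κ₀ / 4) / Real.sin (π * κ₀ / 4) + digamma (2 - κ₀ / 4) - digamma 1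
        = 0 ∧
      (∀ κ ∈ Ioo (4 : ℝ) 8,
        π * Real.cos (π * κ / 4) / Real.sin (π * κ / 4) + digamma (2 - κ / 4) - digamma 1 = 0
          → κ = κ₀) ∧
      κ₀ ∈ Ioo (5 : ℝ) 6 ∧
      ∀ κ ∈ Ioo (4 : ℝ) 8,
        (0 ≤ π * Real.cos (π * κ / 4) / Real.sin (π * κ / 4) + digamma (2 - κ / 4) - digamma 1
          ↔ κ ≤ κ₀) := by
  simp only [← expectedLog_eq_cos_div_sin]
  obtain ⟨κ₀, mem_Ioo_five_six, zero⟩ := exists_expectedLog_eq_zero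
  have mem_Ioo_four_eight : κ₀ ∈ Ioo 4 8 :=
    Ioo_subset_Ioo (by norm_num) (by norm_num) mem_Ioo_five_six
  refine ⟨κ₀, mem_Ioo_four_eight, zero, fun κ hκ hκ_zero ↦ ?_, mem_Ioo_five_six, fun κ hκ ↦ ?_⟩
  · exact strictAntiOn_expectedLog.injOn hκ mem_Ioo_four_eight (hκ_zero.trans zero.symm)
  · rw [← zero, strictAntiOn_expectedLog.le_iff_ge mem_Ioo_four_eight hκ]
end
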